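/- arXiv:math/0511214 — 4 statements merged into one kernel-verified Lean document; each statement's English description precedes it below -/
import Mathlib

section
/- Let K be a commutative ℚ-algebra, P ∈ K[X₁,…,Xₙ], and let Q⁽¹⁾, Q⁽²⁾, … be the Zhao sequence of P. If there is a positive integer M such that Q⁽ᵐ⁾ = 0 for all m with M+1 ≤ m ≤ 2M, then Q⁽ᵐ⁾ = 0 for all m ≥ M+1. -/
open MvPolynomial

/-- The Zhao sequence of `P`: `Q⁽¹⁾ = P` and for `m ≥ 2`,
`Q⁽ᵐ⁾ = (1/(2(m-1))) ∑_{k+ℓ=m, k,ℓ≥1} ∇Q⁽ᵏ⁾ ⬝ ∇Q⁽ˡ⁾`. -/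
noncomputable def zhaoSeq {n : ℕ} {K : Type*} [CommRing K] [Algebra ℚ K]
    (P : MvPolynomial (Fin n) K) : ℕ → MvPolynomial (Fin n) K
  | 0 => 0
  | 1 => P
  | m + 2 =>
      ((1 : ℚ) / (2 * (m + 1))) •
        ∑ k ∈ (Finset.Icc 1 (m + 1)).attach,
          ∑ i : Fin n,
            MvPolynomial.pderiv i (zhaoSeq P k.1) *
              MvPolynomial.pderiv i (zhaoSeq P (m + 2 - k.1))
  decreasing_by
  · exact Nat.lt_succ_of_le (Finset.mem_Icc.mp k.2).2
  · have := (Finset.mem_Icc.mp k.2).1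
    omega

/-- Gap Theorem, algebraic form: if `Q⁽ᵐ⁾ = 0` for `M+1 ≤ m ≤ 2M`
(`M` a positive integer), then `Q⁽ᵐ⁾ = 0` for all `m ≥ M+1`. -/
theorem zhaoSeq_eventually_zero_of_gap {n : ℕ} {K : Type*} [CommRing K] [Algebra ℚ K]
    (P : MvPolynomial (Fin n) K) (M : ℕ) (hM : 0 < M)
    (hgap : ∀ m : ℕ, M + 1 ≤ m → m ≤ 2 * M → zhaoSeq P m = 0) :
    ∀ m : ℕ, M + 1 ≤ m → zhaoSeq P m = 0 := by
  intro m
  induction m using Nat.strong_induction_on with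
  | _ m ih =>
    intro hm
    by_cases h2 : m ≤ 2 * M
    · exact hgap m hm h2
    · obtain ⟨j, rfl⟩ : ∃ j, m = j + 2 := ⟨m - 2, by omega⟩
      rw [zhaoSeq, Finset.sum_eq_zero, smul_zero]
      rintro ⟨k, hk⟩ -
      have hk' := Finset.mem_Icc.mp hk
      refine Finset.sum_eq_zero fun i _ => ?_
      -- `k` and `ℓ = j + 2 - k` are positive with sum at least `2M + 1`: one lies in `[M + 1, m)`.
      by_cases hkM : M + 1 ≤ k
      · simp [ih k (by omega) hkM]
      · simp [ih (j + 2 - k) (by omega) (by omega)]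
end

section
/- Let K be a commutative ℚ-algebra, d ≥ 2, and P ∈ K[X₁,…,Xₙ] homogeneous of degree d+1. Let Q⁽¹⁾, Q⁽²⁾, … be the Zhao sequence of P, and suppose there is a positive integer M such that Q⁽ᵐ⁾ = 0 for all m with M+1 ≤ m ≤ 2M. Then the polynomial map F = X − ∇P has polynomial inverse G = X + ∇(Q⁽¹⁾ + Q⁽²⁾ + ⋯ + Q⁽ᴹ⁾); that is, F_i(G₁,…,Gₙ) = X_i and G_i(F₁,…,Fₙ) = X_i for all i. -/
/-!
The gap condition propagates: for `m > 2M` every product in the recurrence for `Q⁽ᵐ⁾` has a factor of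
index larger than `M`, so `Q⁽ᵐ⁾ = 0` for all `m > M` (`zhaoSeq_eq_zero_of_gap`). Hence
`Q = ∑_{m = 1}^{M} t ^ (m - 1) Q⁽ᵐ⁾` is a polynomial in `t` and `X` that equals `P` at `t = 0`, and the
recurrence says exactly that `2 ∂ₜ Q = ∇Q · ∇Q` (`zhaoGen_ode`). Its gradient satisfies the Burgers
equation, whose characteristics are straight lines, which suggests that `X - t ∇P` and `X + t ∇Q` are
mutually inverse.

This is proved by means of the identities `∇Q(t, X - t ∇P) = ∇P` (`comp_left`) and
`∇P(X + t ∇Q) = ∇Q` (`comp_right`). In each, the difference of the two sides vanishes at `t = 0` and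
satisfies a homogeneous linear transport equation, hence is zero because it is divisible by every
power of `t` (`eq_zero_of_transport`). Setting `t = 1` gives the theorem.
-/

open MvPolynomial

/-! ### Partial derivatives and substitution -/

theorem pderiv_comm_aux {σ K : Type*} [CommRing K] (i j : σ) (p : MvPolynomial σ K) :
    pderiv i (pderiv j p) = pderiv j (pderiv i p) := by
  classical
  ext m
  rcases eq_or_ne i j with rfl | h
  · rfl
  · simp only [coeff_pderiv, Finsupp.add_apply, Finsupp.single_apply, h, h.symm, if_false,
      add_zero, add_right_comm m]
    ring

/-- Chain rule for substituting `g` into a polynomial, with respect to any derivation of the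
target. -/
theorem derivation_aeval {σ K A : Type*} [Fintype σ] [CommRing K] [CommRing A] [Algebra K A]
    (D : Derivation K A A) (g : σ → A) (p : MvPolynomial σ K) :
    D (aeval g p) = ∑ i, aeval g (pderiv i p) * D (g i) := by
  classical
  induction p using MvPolynomial.induction_on with
  | C a => simp
  | add p q hp hq => simp [hp, hq, add_mul, Finset.sum_add_distrib]
  | mul_X p j hp =>
    simp only [map_mul, aeval_X, Derivation.leibniz, hp, smul_eq_mul, map_add, pderiv_X, add_mul,
      Finset.sum_add_distrib, Pi.single_apply]
    simp [Finset.mul_sum, mul_assoc]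

theorem dvd_aeval_sub_aeval {σ K A : Type*} [CommRing K] [CommRing A] [Algebra K A]
    (t : A) (g h : σ → A) (hgh : ∀ i, t ∣ g i - h i) (p : MvPolynomial σ K) :
    t ∣ aeval g p - aeval h p := by
  induction p using MvPolynomial.induction_on with
  | C a => simp
  | add p q hp hq =>
    simpa [add_sub_add_comm] using dvd_add hp hq
  | mul_X p j hp =>
    have := dvd_add (hp.mul_right (g j)) ((hgh j).mul_left (aeval h p))
    simp only [map_mul, aeval_X]
    convert this using 1
    ring

/-! ### Uniqueness for a transport equation -/

/-- Uniqueness for a linear transport equation in the variable `t = X none`: a family `W` with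
zero value at `t = 0` and `∂ₜ Wᵢ = ∑ⱼ Aᵢⱼ Wⱼ + ∑ⱼ Bⱼ ∂ⱼ Wᵢ` is zero. If every `Wⱼ` is divisible by
`t ^ (k + 1)`, then so is the right-hand side, because the `∂ⱼ` do not touch `t`; as `m + 1` is
invertible for every natural number `m`, every `Wᵢ` is then divisible by `t ^ (k + 2)`. -/
theorem eq_zero_of_transport {n : ℕ} {K : Type*} [CommRing K] [Algebra ℚ K]
    (W : Fin n → MvPolynomial (Option (Fin n)) K)
    (A : Fin n → Fin n → MvPolynomial (Option (Fin n)) K)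
    (B : Fin n → MvPolynomial (Option (Fin n)) K)
    (h0 : ∀ i, X none ∣ W i)
    (h : ∀ i, pderiv none (W i) =
      ∑ j, A i j * W j + ∑ j, B j * pderiv (some j) (W i)) (i : Fin n) : W i = 0 := by
  have mul_van : ∀ (k : ℕ) (p q : MvPolynomial (Option (Fin n)) K),
      (∀ m, m none ≤ k → coeff m q = 0) → ∀ m, m none ≤ k → coeff m (p * q) = 0 := by
    intro k p q hq m hm
    rw [coeff_mul]
    refine Finset.sum_eq_zero fun x hx => ?_
    rw [Finset.HasAntidiagonal.mem_antidiagonal] at hx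
    rw [hq x.2, mul_zero]
    have := DFunLike.congr_fun hx none
    simp only [Finsupp.add_apply] at this
    omega
  suffices H : ∀ k : ℕ, ∀ i, ∀ m : Option (Fin n) →₀ ℕ, m none ≤ k → coeff m (W i) = 0 by
    ext m
    simpa using H (m none) i m le_rfl
  intro k
  induction k with
  | zero =>
    intro i m hm
    obtain ⟨V, hV⟩ := h0 i
    rw [hV, mul_comm, coeff_mul_X', if_neg]
    simpa using hm
  | succ k ih =>
    intro i m hm
    rcases Nat.lt_or_ge k (m none) with hk | hk
    swap
    · exact ih i m hk
    -- lower the exponent of `t` by one and read off the coefficient of the `t`-derivative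
    obtain ⟨m', rfl⟩ : ∃ m', m = m' + Finsupp.single none 1 :=
      ⟨m - Finsupp.single none 1, by
        rw [tsub_add_cancel_of_le]
        rw [Finsupp.single_le_iff]; omega⟩
    have hm' : m' none ≤ k := by simpa using hm
    have key : coeff m' (pderiv none (W i)) = 0 := by
      rw [h i, coeff_add, coeff_sum, coeff_sum, Finset.sum_eq_zero, Finset.sum_eq_zero, add_zero]
      · intro j _
        refine mul_van k _ _ (fun q hq => ?_) m' hm'
        rw [coeff_pderiv, ih i _ (by simpa using hq), zero_mul]
      · intro j _
        exact mul_van k _ _ (ih j) m' hm'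
    rw [coeff_pderiv] at key
    have h2 : ((m' none : ℚ) + 1) • coeff (m' + Finsupp.single none 1) (W i) = 0 := by
      rw [Algebra.smul_def, mul_comm]
      simpa using key
    exact (smul_eq_zero.mp h2).resolve_left (by positivity)

theorem dvd_pderiv_some {n : ℕ} {K : Type*} [CommRing K] {i : Fin n} {p : MvPolynomial (Option (Fin n)) K} (h : X none ∣ p) :
    X none ∣ pderiv (some i) p := by
  obtain ⟨V, rfl⟩ := h
  rw [pderiv_mul, pderiv_X_of_ne (by simp), zero_mul, zero_add]
  exact dvd_mul_right _ _

theorem pderiv_none_rename {n : ℕ} {K : Type*} [CommRing K] (p : MvPolynomial (Fin n) K) :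
    pderiv none (rename some p : MvPolynomial (Option (Fin n)) K) = 0 := by
  apply pderiv_eq_zero_of_notMem_vars
  intro h
  have := vars_rename some p h
  simp at this

/-! ### The Hamilton-Jacobi equation and the deformed inverse pair -/

section Deformation

variable {n : ℕ} {K : Type*} [CommRing K] [Algebra ℚ K]

/-- The gradient `N = ∇Q` of a solution of `2 ∂ₜ Q = ∇Q · ∇Q` satisfies the Burgers equation
`∂ₜ Nᵢ = ∑ⱼ Nⱼ ∂ⱼ Nᵢ`, by symmetry of second derivatives. -/
theorem pderiv_burgers (Q : MvPolynomial (Option (Fin n)) K)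
    (hode : 2 * pderiv none Q = ∑ i, pderiv (some i) Q * pderiv (some i) Q) (i : Fin n) :
    pderiv none (pderiv (some i) Q) =
      ∑ j, pderiv (some j) Q * pderiv (some j) (pderiv (some i) Q) := by
  have h := congrArg (pderiv (some i)) hode
  have h2 : (2 : ℚ) • pderiv none (pderiv (some i) Q) =
      (2 : ℚ) • ∑ j, pderiv (some j) Q * pderiv (some j) (pderiv (some i) Q) := by
    simp only [Algebra.smul_def, map_ofNat]
    rw [two_mul, map_add] at h
    rw [pderiv_comm_aux none, two_mul, h, map_sum, Finset.mul_sum]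
    refine Finset.sum_congr rfl fun j _ => ?_
    rw [pderiv_mul, pderiv_comm_aux (some j)]
    ring
  exact smul_right_injective _ (two_ne_zero (α := ℚ)) h2

/-- If `Q` solves `2 ∂ₜ Q = ∇Q · ∇Q` with `Q = P` at `t = 0`, then `∇Q(t, X - t ∇P) = ∇P`.
By the chain rule the difference `E` satisfies `∂ₜ Eᵢ = ∑ⱼ (∂ⱼ ∂ᵢ Q)(t, X - t ∇P) Eⱼ`. -/
theorem comp_left (P : MvPolynomial (Fin n) K) (Q : MvPolynomial (Option (Fin n)) K)
    (h0 : X none ∣ Q - rename some P)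
    (hode : 2 * pderiv none Q = ∑ i, pderiv (some i) Q * pderiv (some i) Q) (i : Fin n) :
    aeval (fun o : Option (Fin n) => o.elim (X none)
        fun j => X (some j) - X none * rename some (pderiv j P)) (pderiv (some i) Q)
      = rename some (pderiv i P) := by
  set F : Option (Fin n) → MvPolynomial (Option (Fin n)) K :=
    fun o => o.elim (X none) fun j => X (some j) - X none * rename some (pderiv j P) with hFdef
  refine sub_eq_zero.mp (eq_zero_of_transport
    (fun i => aeval F (pderiv (some i) Q) - rename some (pderiv i P))
    (fun i j => aeval F (pderiv (some j) (pderiv (some i) Q))) 0 (fun i => ?_) (fun i => ?_) i)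
  · have h1 : X none ∣ aeval F (pderiv (some i) Q) - aeval X (pderiv (some i) Q) := by
      apply dvd_aeval_sub_aeval
      rintro (_ | j)
      · simp [hFdef]
      · simp [hFdef]
    have h2 := dvd_pderiv_some (i := i) h0
    rw [map_sub, pderiv_rename (Option.some_injective _)] at h2
    simpa [aeval_X_left_apply] using dvd_add h1 h2
  · rw [map_sub, pderiv_none_rename, derivation_aeval, Fintype.sum_option, pderiv_burgers Q hode]
    simp [hFdef, pderiv_none_rename, mul_sub, Finset.sum_sub_distrib, mul_comm]
    ring

/-- If `Q` solves `2 ∂ₜ Q = ∇Q · ∇Q` with `Q = P` at `t = 0`, then `∇P(X + t ∇Q) = ∇Q`.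
Both `X + t ∇Q` and `∇Q` solve `∂ₜ u = ∑ⱼ (∂ⱼ Q) ∂ⱼ u`, hence so do `∇P(X + t ∇Q)` and the
difference of the two sides. -/
theorem comp_right (P : MvPolynomial (Fin n) K) (Q : MvPolynomial (Option (Fin n)) K)
    (h0 : X none ∣ Q - rename some P)
    (hode : 2 * pderiv none Q = ∑ i, pderiv (some i) Q * pderiv (some i) Q) (i : Fin n) :
    aeval (fun j => X (some j) + X none * pderiv (some j) Q) (pderiv i P) = pderiv (some i) Q := by
  set G : Fin n → MvPolynomial (Option (Fin n)) K :=
    fun j => X (some j) + X none * pderiv (some j) Q with hGdef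
  refine sub_eq_zero.mp (eq_zero_of_transport
    (fun i => aeval G (pderiv i P) - pderiv (some i) Q)
    0 (fun j => pderiv (some j) Q) (fun i => ?_) (fun i => ?_) i)
  · have h1 : X none ∣ aeval G (pderiv i P) - aeval (X ∘ some) (pderiv i P) := by
      apply dvd_aeval_sub_aeval
      intro j
      simp [hGdef]
    have h2 := dvd_pderiv_some (i := i) h0
    rw [map_sub, pderiv_rename (Option.some_injective _)] at h2
    have hren : aeval (X ∘ some) (pderiv i P) =
        (rename some (pderiv i P) : MvPolynomial (Option (Fin n)) K) := by
      rw [← aeval_X_left_apply (rename some (pderiv i P)), aeval_rename]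
    rw [hren] at h1
    simpa using dvd_sub h1 h2
  · have hG0 : ∀ l, pderiv none (G l) =
        pderiv (some l) Q + ∑ j, pderiv (some j) Q * (X none * pderiv (some j) (pderiv (some l) Q)) := by
      intro l
      simp only [hGdef, map_add, pderiv_mul, pderiv_burgers Q hode, pderiv_X_self]
      rw [pderiv_X_of_ne (by simp)]
      simp [Finset.mul_sum, mul_left_comm]
    have hGj : ∀ j l, pderiv (some j) (G l) =
        pderiv (some j) (X (some l)) + X none * pderiv (some j) (pderiv (some l) Q) := by
      intro j l
      simp [hGdef]
    -- the extra term `∂ⱼ Q` in `∂ₜ Gⱼ` is exactly the contribution of `∂ⱼ X`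
    have hG : ∀ l, pderiv none (G l) = ∑ j, pderiv (some j) Q * pderiv (some j) (G l) := by
      intro l
      rw [hG0]
      simp only [hGj, mul_add, Finset.sum_add_distrib]
      congr 1
      rw [Finset.sum_eq_single l]
      · simp
      · intro j _ hj
        rw [pderiv_X_of_ne (by simpa using hj.symm), mul_zero]
      · simp
    simp only [map_sub, derivation_aeval, pderiv_burgers Q hode, hG, mul_sub,
      Finset.sum_sub_distrib, Finset.mul_sum, Pi.zero_apply, zero_mul, Finset.sum_const_zero,
      sub_zero, zero_add]
    rw [Finset.sum_comm]
    simp only [mul_left_comm]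

/-! ### The generating function of the Zhao sequence -/

theorem algebraMap_two_mul_succ (m : ℕ) :
    algebraMap ℚ (MvPolynomial (Fin n) K) (2 * (m + 1)) =
      2 * ((m + 1 : ℕ) : MvPolynomial (Fin n) K) := by
  simp only [map_mul, map_ofNat, map_add, map_natCast, map_one, Nat.cast_add, Nat.cast_one]

/-- The defining recurrence with denominators cleared and indices shifted to start at `0`. -/
theorem zhaoSeq_recurrence (P : MvPolynomial (Fin n) K) (m : ℕ) :
    2 * ((m + 1 : ℕ) : MvPolynomial (Fin n) K) * zhaoSeq P (m + 2) =
      ∑ x ∈ Finset.HasAntidiagonal.antidiagonal m,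
        ∑ i, pderiv i (zhaoSeq P (x.1 + 1)) * pderiv i (zhaoSeq P (x.2 + 1)) := by
  rw [zhaoSeq, Finset.sum_attach (Finset.Icc 1 (m + 1)) (fun k => ∑ i : Fin n,
    pderiv i (zhaoSeq P k) * pderiv i (zhaoSeq P (m + 2 - k)))]
  have hsum : ∑ k ∈ Finset.Icc 1 (m + 1), ∑ i : Fin n,
      pderiv i (zhaoSeq P k) * pderiv i (zhaoSeq P (m + 2 - k)) =
      ∑ x ∈ Finset.HasAntidiagonal.antidiagonal m,
        ∑ i, pderiv i (zhaoSeq P (x.1 + 1)) * pderiv i (zhaoSeq P (x.2 + 1)) := by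
    refine Finset.sum_nbij' (fun k => (k - 1, m + 1 - k)) (fun x => x.1 + 1) ?_ ?_ ?_ ?_ ?_
    · intro k hk
      simp only [Finset.mem_Icc, Finset.HasAntidiagonal.mem_antidiagonal] at *
      omega
    · intro x hx
      simp only [Finset.mem_Icc, Finset.HasAntidiagonal.mem_antidiagonal] at *
      omega
    · intro k hk
      simp only [Finset.mem_Icc] at *
      omega
    · rintro ⟨a, b⟩ hx
      simp only [Finset.HasAntidiagonal.mem_antidiagonal, Prod.mk.injEq] at *
      omega
    · intro k hk
      simp only [Finset.mem_Icc] at hk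
      rw [show k - 1 + 1 = k by omega, show m + 1 - k + 1 = m + 2 - k by omega]
  rw [hsum, Algebra.smul_def, ← mul_assoc]
  have hunit : (2 * ((m + 1 : ℕ) : MvPolynomial (Fin n) K)) *
      algebraMap ℚ (MvPolynomial (Fin n) K) (1 / (2 * (m + 1))) = 1 := by
    rw [← algebraMap_two_mul_succ, ← map_mul, mul_one_div_cancel (by positivity), map_one]
  rw [hunit, one_mul]

/-- Beyond `2 * M`, every product in the recurrence has a factor of index larger than `M`, so the
gap propagates to all larger indices. -/
theorem zhaoSeq_eq_zero_of_gap (P : MvPolynomial (Fin n) K) (M : ℕ) (hM : 0 < M)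
    (hgap : ∀ m : ℕ, M + 1 ≤ m → m ≤ 2 * M → zhaoSeq P m = 0) (m : ℕ) (hm : M + 1 ≤ m) :
    zhaoSeq P m = 0 := by
  induction m using Nat.strong_induction_on with
  | _ m ih =>
    rcases Nat.lt_or_ge (2 * M) m with h | h
    swap
    · exact hgap m hm h
    obtain ⟨m, rfl⟩ : ∃ k, m = k + 2 := ⟨m - 2, by omega⟩
    have hrec := zhaoSeq_recurrence P m
    rw [Finset.sum_eq_zero] at hrec
    · have h2 : ((2 : ℚ) * (m + 1)) • zhaoSeq P (m + 2) = 0 := by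
        rw [Algebra.smul_def, algebraMap_two_mul_succ, hrec]
      exact (smul_eq_zero.mp h2).resolve_left (by positivity)
    · rintro ⟨a, b⟩ hab
      rw [Finset.HasAntidiagonal.mem_antidiagonal] at hab
      refine Finset.sum_eq_zero fun i _ => ?_
      simp only at hab ⊢
      rcases Nat.lt_or_ge a M with ha | ha
      · rw [ih (b + 1) (by omega) (by omega), map_zero, mul_zero]
      · rw [ih (a + 1) (by omega) (by omega), map_zero, zero_mul]

/-- The truncated generating function `∑_{m = 1}^{M} t ^ (m - 1) Q⁽ᵐ⁾` of the Zhao sequence. The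
variable `t` is `X none`, and `Xᵢ` is `X (some i)`. -/
noncomputable def zhaoGen (P : MvPolynomial (Fin n) K) (M : ℕ) :
    MvPolynomial (Option (Fin n)) K :=
  ∑ k ∈ Finset.range M, X none ^ k * rename some (zhaoSeq P (k + 1))

theorem pderiv_zhaoGen (P : MvPolynomial (Fin n) K) (M : ℕ) (i : Fin n) :
    pderiv (some i) (zhaoGen P M) =
      ∑ k ∈ Finset.range M, X none ^ k * rename some (pderiv i (zhaoSeq P (k + 1))) := by
  simp only [zhaoGen, map_sum, pderiv_mul, pderiv_pow, pderiv_rename (Option.some_injective _)]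
  rw [pderiv_X_of_ne (by simp)]
  simp

/-- When the Zhao sequence vanishes beyond `M`, comparing powers of `t` turns its recurrence into
the Hamilton-Jacobi equation `2 ∂ₜ Q = ∇Q · ∇Q`. -/
theorem zhaoGen_ode (P : MvPolynomial (Fin n) K) (M : ℕ)
    (hz : ∀ m, M + 1 ≤ m → zhaoSeq P m = 0) :
    2 * pderiv none (zhaoGen P M) =
      ∑ i, pderiv (some i) (zhaoGen P M) * pderiv (some i) (zhaoGen P M) := by
  have hR : ∑ i, pderiv (some i) (zhaoGen P M) * pderiv (some i) (zhaoGen P M) =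
      ∑ m ∈ Finset.range (2 * M), X none ^ m * rename some (∑ x ∈ Finset.HasAntidiagonal.antidiagonal m,
        ∑ i, pderiv i (zhaoSeq P (x.1 + 1)) * pderiv i (zhaoSeq P (x.2 + 1))) := by
    trans ∑ i, ∑ x ∈ Finset.range M ×ˢ Finset.range M,
        X none ^ x.1 * rename some (pderiv i (zhaoSeq P (x.1 + 1))) *
          (X none ^ x.2 * rename some (pderiv i (zhaoSeq P (x.2 + 1))))
    · simp only [pderiv_zhaoGen, Finset.sum_mul_sum, Finset.sum_product]
    rw [Finset.sum_comm, ← Finset.sum_fiberwise_of_maps_to (t := Finset.range (2 * M))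
      (g := fun x : ℕ × ℕ => x.1 + x.2)]
    swap
    · intro x hx
      simp only [Finset.mem_product, Finset.mem_range] at *
      omega
    refine Finset.sum_congr rfl fun m _ => ?_
    rw [map_sum, Finset.mul_sum]
    refine (Finset.sum_subset (fun x hx => ?_) (fun x hx hx' => ?_)).trans
      (Finset.sum_congr rfl fun x hx => ?_)
    · simpa using (Finset.mem_filter.mp hx).2
    · rw [Finset.HasAntidiagonal.mem_antidiagonal] at hx
      refine Finset.sum_eq_zero fun i _ => ?_
      simp only [Finset.mem_filter, Finset.mem_product, Finset.mem_range, hx, and_true] at hx'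
      rcases Nat.lt_or_ge x.1 M with ha | ha
      · rw [hz (x.2 + 1) (by omega)]
        simp
      · rw [hz (x.1 + 1) (by omega)]
        simp
    · rw [Finset.HasAntidiagonal.mem_antidiagonal] at hx
      rw [map_sum, Finset.mul_sum]
      refine Finset.sum_congr rfl fun i _ => ?_
      rw [map_mul, ← hx, pow_add]
      ring
  -- terms of index at least `M` vanish, so the sum may be lengthened to match the squares
  have hL : zhaoGen P M =
      ∑ k ∈ Finset.range (2 * M + 1), X none ^ k * rename some (zhaoSeq P (k + 1)) := by
    refine Finset.sum_subset (Finset.range_mono (by omega)) fun k _ hk => ?_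
    rw [hz (k + 1) (by simpa using hk), map_zero, mul_zero]
  rw [hR, hL, Finset.sum_range_succ']
  simp only [← zhaoSeq_recurrence, map_add, map_sum, pderiv_mul, pderiv_pow, pderiv_none_rename,
    pderiv_X_self]
  simp only [pow_zero, map_mul, map_ofNat, map_natCast, mul_zero, add_zero, Nat.cast_zero,
    zero_mul, Nat.add_sub_cancel, mul_one, Finset.mul_sum]
  refine Finset.sum_congr rfl fun m _ => ?_
  ring

theorem zhaoGen_initial (P : MvPolynomial (Fin n) K) (M : ℕ) (hM : 0 < M) :
    X none ∣ zhaoGen P M - rename some P := by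
  obtain ⟨M, rfl⟩ : ∃ k, M = k + 1 := ⟨M - 1, by omega⟩
  rw [zhaoGen, Finset.sum_range_succ']
  simp only [zhaoSeq, pow_zero, zero_add, one_mul, add_sub_cancel_right]
  refine Finset.dvd_sum fun k _ => ?_
  rw [pow_succ', mul_assoc]
  exact dvd_mul_right _ _

end Deformation

/-! ### Specialization at `t = 1` -/

/-- Gap Theorem for the symmetric case: if `P` is homogeneous of degree
`d+1` (`d ≥ 2`) and `Q⁽ᵐ⁾ = 0` for `M+1 ≤ m ≤ 2M`, then `F = X - ∇P` has polynomial
inverse `G = X + ∇(Q⁽¹⁾ + ⋯ + Q⁽ᴹ⁾)`. -/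
theorem gap_theorem_symmetric_case {n : ℕ} {K : Type*} [CommRing K] [Algebra ℚ K]
    (d : ℕ) (hd : 2 ≤ d) (P : MvPolynomial (Fin n) K)
    (hP : P.IsHomogeneous (d + 1)) (M : ℕ) (hM : 0 < M)
    (hgap : ∀ m : ℕ, M + 1 ≤ m → m ≤ 2 * M → zhaoSeq P m = 0)
    (F G : Fin n → MvPolynomial (Fin n) K)
    (hF : ∀ i, F i = X i - pderiv i P)
    (hG : ∀ i, G i = X i + pderiv i (∑ m ∈ Finset.Icc 1 M, zhaoSeq P m)) :
    (∀ i, aeval G (F i) = X i) ∧ (∀ i, aeval F (G i) = X i) := by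
  have hz := zhaoSeq_eq_zero_of_gap P M hM hgap
  have hode := zhaoGen_ode P M hz
  have h0 := zhaoGen_initial P M hM
  -- `e` is the specialization `t = 1`
  set e : MvPolynomial (Option (Fin n)) K →ₐ[K] MvPolynomial (Fin n) K :=
    aeval (fun o : Option (Fin n) => o.elim 1 X) with he
  have her : ∀ p : MvPolynomial (Fin n) K, e (rename some p) = p := fun p => by
    rw [he, aeval_rename]
    exact aeval_X_left_apply p
  have heN : ∀ i, e (pderiv (some i) (zhaoGen P M)) =
      pderiv i (∑ m ∈ Finset.Icc 1 M, zhaoSeq P m) := by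
    intro i
    rw [pderiv_zhaoGen, ← Finset.Ico_add_one_right_eq_Icc, Finset.sum_Ico_eq_sum_range]
    simp only [map_sum, map_mul, map_pow, her, Nat.add_sub_cancel, add_comm 1]
    simp [he]
  have hGe : ∀ i, e (X (some i) + X none * pderiv (some i) (zhaoGen P M)) = G i := by
    intro i
    rw [hG, map_add, map_mul, heN]
    simp [he]
  constructor
  · intro i
    have h := congrArg e (comp_right P _ h0 hode i)
    rw [comp_aeval_apply] at h
    simp only [hGe, heN] at h
    rw [hF, map_sub, aeval_X, h, hG, add_sub_cancel_right]
  · intro i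
    -- setting `t = 1` first and then substituting `F` agrees with the opposite order
    have hcomm : ∀ p : MvPolynomial (Option (Fin n)) K,
        e (aeval (fun o : Option (Fin n) => o.elim (X none)
          fun j => X (some j) - X none * rename some (pderiv j P)) p) = aeval F (e p) := by
      intro p
      rw [comp_aeval_apply, he, comp_aeval_apply, ← he]
      congr 2
      funext o
      cases o with
      | none => simp [he]
      | some j =>
        simp only [Option.elim_some, map_sub, map_mul, her, aeval_X, hF]
        simp [he]
    have h := congrArg e (comp_left P _ h0 hode i)
    rw [hcomm, heN, her] at h
    rw [hG, map_add, aeval_X, h, hF, sub_add_cancel]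
end

section
/- Let K be a commutative ℚ-algebra, P ∈ K[X₁,…,Xₙ] homogeneous of degree d ≥ 2, and r ≥ 1 an integer with (Hess P)^r = 0. Then (Hess P)^{r−1} annihilates the gradient of P viewed as a column vector: for every i, Σ_{j=1}^{n} ((Hess P)^{r−1})_{ij} · D_jP = 0. -/
/-!
By Euler's identity applied to the partial derivatives `DᵢP`, which are homogeneous of degree
`d - 1`, the Hessian satisfies `Hess P · X = (d - 1) ∇P`. Multiplying by `(Hess P)^{r-1}` gives
`(d - 1) (Hess P)^{r-1} ∇P = (Hess P)^r X = 0`, and `d - 1 ≥ 1` is invertible in a `ℚ`-algebra.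
-/

open MvPolynomial

/-- The Hessian matrix `(DᵢDⱼP)` of a multivariate polynomial. -/
noncomputable def hessian {n : ℕ} {K : Type*} [CommRing K]
    (P : MvPolynomial (Fin n) K) :
    Matrix (Fin n) (Fin n) (MvPolynomial (Fin n) K) :=
  Matrix.of fun i j => pderiv i (pderiv j P)

theorem pderiv_pderiv_comm {n : ℕ} {K : Type*} [CommRing K] (i j : Fin n)
    (P : MvPolynomial (Fin n) K) : pderiv i (pderiv j P) = pderiv j (pderiv i P) := by
  -- The commutator of two derivations is a derivation, so it suffices that it kills the variables.
  have h : ⁅(pderiv i : Derivation K (MvPolynomial (Fin n) K) (MvPolynomial (Fin n) K)),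
      (pderiv j : Derivation K (MvPolynomial (Fin n) K) (MvPolynomial (Fin n) K))⁆ = 0 := by
    apply MvPolynomial.derivation_ext
    intro k
    simp [Derivation.commutator_apply, pderiv_X, Pi.single_apply, apply_ite]
  have h2 := DFunLike.congr_fun h P
  rwa [Derivation.commutator_apply, Derivation.zero_apply, sub_eq_zero] at h2

theorem hessian_mulVec_X {n : ℕ} {K : Type*} [CommRing K] {d : ℕ}
    {P : MvPolynomial (Fin n) K} (hP : P.IsHomogeneous d) :
    (hessian P).mulVec X = (d - 1) • fun j => pderiv j P := by
  funext i
  have euler := (hP.pderiv (i := i)).sum_X_mul_pderiv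
  rw [Pi.smul_apply, ← euler, Matrix.mulVec, dotProduct]
  refine Finset.sum_congr rfl fun j _ => ?_
  rw [hessian, Matrix.of_apply, pderiv_pderiv_comm, mul_comm]

/-- if `P` is homogeneous of degree `d ≥ 2` and `(Hess P)^r = 0`, then
`(Hess P)^{r-1}` annihilates the gradient `∇P`. -/
theorem hessian_pow_pred_mulVec_grad_eq_zero {n : ℕ} {K : Type*} [CommRing K] [Algebra ℚ K]
    (d : ℕ) (hd : 2 ≤ d) (P : MvPolynomial (Fin n) K) (hP : P.IsHomogeneous d)
    (r : ℕ) (hr : 1 ≤ r) (hnil : hessian P ^ r = 0) :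
    ∀ i : Fin n, ∑ j : Fin n, (hessian P ^ (r - 1)) i j * pderiv j P = 0 := by
  intro i
  have h : (d - 1) • (hessian P ^ (r - 1)).mulVec (fun j => pderiv j P) = 0 := by
    rw [← Matrix.mulVec_smul, ← hessian_mulVec_X hP, Matrix.mulVec_mulVec, ← pow_succ,
      Nat.sub_add_cancel hr, hnil, Matrix.zero_mulVec]
  have hi : (d - 1) • ∑ j : Fin n, (hessian P ^ (r - 1)) i j * pderiv j P = 0 := congr_fun h i
  have hd0 : ((d - 1 : ℕ) : ℚ) ≠ 0 := by
    rw [Nat.cast_ne_zero]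
    omega
  rwa [← Nat.cast_smul_eq_nsmul ℚ, smul_eq_zero_iff_right hd0] at hi
end

section
/- Let K be a commutative ℚ-algebra, P ∈ K[X₁,…,Xₙ] homogeneous of degree d ≥ 2, and r ≥ 2 an integer with (Hess P)^r = 0. Then Σ_{i=1}^{n} Σ_{j=1}^{n} (D_iP) · ((Hess P)^{r−2})_{ij} · (D_jP) = 0; that is, the scalar ∇Pᵀ (Hess P)^{r−2} ∇P vanishes. -/
/-!
Write `H = Hess P` and `x = (X₁, …, Xₙ)`. Each `DᵢP` is homogeneous of degree `d - 1`, so Euler's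
identity gives `xᵀ H = (d - 1) ∇Pᵀ`, and, since `H` is symmetric, `H x = (d - 1) ∇P`. Hence
`(d - 1)² ∇Pᵀ H ^ (r - 2) ∇P = xᵀ H ^ r x = 0`, and `d - 1` is a nonzero integer, which can be
cancelled over a `ℚ`-algebra.
-/

open MvPolynomial

open Matrix in
/-- Euler's identity for the partial derivatives of `P`. For `d = 0` the truncated `d - 1 = 0` is
harmless, since `P` is then constant. -/
theorem vecMul_X_hessian {n : ℕ} {K : Type*} [CommRing K] {d : ℕ}
    {P : MvPolynomial (Fin n) K} (hP : P.IsHomogeneous d) :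
    X ᵥ* hessian P = (d - 1) • fun i => pderiv i P := by
  ext1 i
  simpa [vecMul, dotProduct, hessian] using hP.pderiv.sum_X_mul_pderiv

theorem hessian_transpose {n : ℕ} {K : Type*} [CommRing K] (P : MvPolynomial (Fin n) K) :
    (hessian P).transpose = hessian P := by
  ext1 i j
  -- The commutator of two partial derivatives is a derivation that kills every variable.
  have h : ⁅pderiv (R := K) j, pderiv (R := K) i⁆ = 0 := by
    classical
    refine MvPolynomial.derivation_ext fun k => ?_
    simp [Derivation.commutator_apply, pderiv_X, Pi.single_apply, apply_ite]
  simpa [Derivation.commutator_apply, sub_eq_zero, hessian] using DFunLike.congr_fun h P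

open Matrix in
/-- if `P` is homogeneous of degree `d ≥ 2` and `(Hess P)^r = 0` with
`r ≥ 2`, then the scalar `∇Pᵀ (Hess P)^{r-2} ∇P` vanishes. -/
theorem grad_hessian_pow_grad_eq_zero {n : ℕ} {K : Type*} [CommRing K] [Algebra ℚ K]
    (d : ℕ) (hd : 2 ≤ d) (P : MvPolynomial (Fin n) K) (hP : P.IsHomogeneous d)
    (r : ℕ) (hr : 2 ≤ r) (hnil : hessian P ^ r = 0) :
    ∑ i : Fin n, ∑ j : Fin n,
      pderiv i P * (hessian P ^ (r - 2)) i j * pderiv j P = 0 := by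
  obtain ⟨s, rfl⟩ := Nat.exists_eq_add_of_le' hr
  rw [Nat.add_sub_cancel]
  set g : Fin n → MvPolynomial (Fin n) K := fun i => pderiv i P
  have hl : X ᵥ* hessian P = (d - 1) • g := vecMul_X_hessian hP
  have hrt : hessian P *ᵥ X = (d - 1) • g := by
    rw [← hl, ← vecMul_transpose, hessian_transpose]
  have key : (d - 1) • (d - 1) • (g ⬝ᵥ (hessian P ^ s *ᵥ g)) = 0 := by
    calc (d - 1) • (d - 1) • (g ⬝ᵥ (hessian P ^ s *ᵥ g))
        = ((d - 1) • g) ⬝ᵥ (hessian P ^ s *ᵥ ((d - 1) • g)) := by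
          rw [mulVec_smul, dotProduct_smul, smul_dotProduct]
      _ = X ⬝ᵥ ((hessian P * (hessian P ^ s * hessian P)) *ᵥ X) := by
          nth_rw 1 [← hl]
          rw [← hrt, ← dotProduct_mulVec, mulVec_mulVec, mulVec_mulVec, Matrix.mul_assoc]
      _ = 0 := by
          rw [← pow_succ, ← pow_succ', hnil, zero_mulVec, dotProduct_zero]
  have hd' : ((d - 1 : ℕ) : ℚ) ≠ 0 := by
    rw [Nat.cast_ne_zero]; omega
  rw [← Nat.cast_smul_eq_nsmul ℚ, ← Nat.cast_smul_eq_nsmul ℚ, smul_eq_zero_iff_right hd',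
    smul_eq_zero_iff_right hd'] at key
  simpa [dotProduct, mulVec, Finset.mul_sum, mul_assoc] using key
end
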